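/- Let φ(x) be a formula of the correspondence language with at most the free variable x. Then φ(x) is logically equivalent to the (2,2)-standard x-translation ST_22(I,x) of some modal intuitionistic formula I if and only if φ(x) is invariant with respect to (2,2)-modal asimulations. -/

import Mathlib

namespace ModalIntAsim

/-- Binary relation symbols of the correspondence vocabulary: R, R_□, R_◇. -/
inductive RelSym : Type
  | r | box | diam
deriving DecidableEq

/-- Formulas of the correspondence language: classical first-order logic without
identity, with variables indexed by `ℕ`, unary predicate letters `P n` (n : ℕ),
and the three binary relation symbols. -/
inductive FOForm : Type
  | falsum : FOForm
  | pred : ℕ → ℕ → FOForm            -- `pred n v` is `P_n(x_v)`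
  | rel : RelSym → ℕ → ℕ → FOForm    -- `rel s v w` is `S(x_v, x_w)`
  | conj : FOForm → FOForm → FOForm
  | disj : FOForm → FOForm → FOForm
  | impl : FOForm → FOForm → FOForm
  | all : ℕ → FOForm → FOForm
  | ex : ℕ → FOForm → FOForm

namespace FOForm

/-- Free variables of a correspondence formula. -/
def freeVars : FOForm → Finset ℕ
  | falsum => ∅
  | pred _ v => {v}
  | rel _ v w => {v, w}
  | conj f g => f.freeVars ∪ g.freeVars
  | disj f g => f.freeVars ∪ g.freeVars
  | impl f g => f.freeVars ∪ g.freeVars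
  | all v f => f.freeVars \ {v}
  | ex v f => f.freeVars \ {v}

/-- The unary predicate letters occurring in a formula (the binary relation
symbols R, R_□, R_◇ are regarded as belonging to every vocabulary Σ_φ). -/
def predLetters : FOForm → Finset ℕ
  | falsum => ∅
  | pred n _ => {n}
  | rel _ _ _ => ∅
  | conj f g => f.predLetters ∪ g.predLetters
  | disj f g => f.predLetters ∪ g.predLetters
  | impl f g => f.predLetters ∪ g.predLetters
  | all _ f => f.predLetters
  | ex _ f => f.predLetters

/-- Degree of a formula: the greatest number of nested quantifiers. -/
def degree : FOForm → ℕ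
  | falsum => 0
  | pred _ _ => 0
  | rel _ _ _ => 0
  | conj f g => max f.degree g.degree
  | disj f g => max f.degree g.degree
  | impl f g => max f.degree g.degree
  | all _ f => f.degree + 1
  | ex _ f => f.degree + 1

end FOForm

/-- A model of the correspondence language: a domain together with
interpretations of R, R_□, R_◇ and of the unary predicate letters.
(A Θ-model only consults the letters in Θ.) -/
structure Model : Type 1 where
  U : Type
  rel : U → U → Prop
  relBox : U → U → Prop
  relDiam : U → U → Prop
  pred : ℕ → U → Prop

/-- Interpretation of a binary relation symbol in a model. -/
def Model.relOf (M : Model) : RelSym → M.U → M.U → Prop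
  | .r => M.rel
  | .box => M.relBox
  | .diam => M.relDiam

/-- Tarskian satisfaction of a formula in a model under an assignment. -/
def Sat (M : Model) : FOForm → (ℕ → M.U) → Prop
  | .falsum, _ => False
  | .pred n v, α => M.pred n (α v)
  | .rel s v w, α => M.relOf s (α v) (α w)
  | .conj f g, α => Sat M f α ∧ Sat M g α
  | .disj f g, α => Sat M f α ∨ Sat M g α
  | .impl f g, α => Sat M f α → Sat M g α
  | .all v f, α => ∀ u : M.U, Sat M f (Function.update α v u)
  | .ex v f, α => ∃ u : M.U, Sat M f (Function.update α v u)

/-- `M, a ⊨ φ(x)`: φ is true in `M` under any assignment sending `x` to `a`. -/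
def SatAt (M : Model) (a : M.U) (x : ℕ) (φ : FOForm) : Prop :=
  ∀ α : ℕ → M.U, α x = a → Sat M φ α

/-- Logical equivalence of correspondence formulas. -/
def Equiv (φ ψ : FOForm) : Prop :=
  ∀ (M : Model) (α : ℕ → M.U), Sat M φ α ↔ Sat M ψ α

/-- Logical entailment between correspondence formulas. -/
def Entails (φ ψ : FOForm) : Prop :=
  ∀ (M : Model) (α : ℕ → M.U), Sat M φ α → Sat M ψ α

/-- Modal intuitionistic formulas: built from propositional letters `p n`
using ⊥, ∧, ∨, →, □, ◇. -/
inductive MForm : Type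
  | bot : MForm
  | prop : ℕ → MForm
  | conj : MForm → MForm → MForm
  | disj : MForm → MForm → MForm
  | impl : MForm → MForm → MForm
  | box : MForm → MForm
  | diam : MForm → MForm

/-- The (i,j)-standard x-translation `ST_ij`.  `boxOne = true` means the box
clause (□₁) is used (i = 1), `boxOne = false` means (□₂) (i = 2); likewise
`diamOne = true` means the diamond clause (◇₁) (j = 1) and `diamOne = false`
means (◇₂) (j = 2).  Bound variables are chosen fresh as `x+1`, `x+2`. -/
def ST (boxOne diamOne : Bool) : MForm → ℕ → FOForm
  | .bot, _ => .falsum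
  | .prop n, x => .pred n x
  | .conj I J, x => .conj (ST boxOne diamOne I x) (ST boxOne diamOne J x)
  | .disj I J, x => .disj (ST boxOne diamOne I x) (ST boxOne diamOne J x)
  | .impl I J, x =>
      .all (x + 1) (.impl (.rel .r x (x + 1))
        (.impl (ST boxOne diamOne I (x + 1)) (ST boxOne diamOne J (x + 1))))
  | .box I, x =>
      if boxOne then
        .all (x + 1) (.impl (.rel .box x (x + 1)) (ST boxOne diamOne I (x + 1)))
      else
        .all (x + 1) (.impl (.rel .r x (x + 1))
          (.all (x + 2) (.impl (.rel .box (x + 1) (x + 2)) (ST boxOne diamOne I (x + 2)))))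
  | .diam I, x =>
      if diamOne then
        .ex (x + 1) (.conj (.rel .diam x (x + 1)) (ST boxOne diamOne I (x + 1)))
      else
        .all (x + 1) (.impl (.rel .r x (x + 1))
          (.ex (x + 2) (.conj (.rel .diam (x + 1) (x + 2)) (ST boxOne diamOne I (x + 2)))))

/-! ### Conditions on relations between tuples (the k-asimulation conditions).
A relation between the two models is represented by its two directed
components; `N` is the model of the source tuple and `P` that of the target
tuple.  A tuple `(ā_m, a)` is represented as the list `as ++ [a]`, with
`m = as.length`. -/

section TupleConds

variable (N P : Model)

/-- The "p-type" condition: related tuples are nonempty and of equal length. -/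
def TypeCond (A : List N.U → List P.U → Prop) : Prop :=
  ∀ as bs, A as bs → as ≠ [] ∧ as.length = bs.length

/-- (p-base). -/
def BaseCond (Θ : Set ℕ) (A : List N.U → List P.U → Prop) : Prop :=
  ∀ (as : List N.U) (bs : List P.U) (a : N.U) (b : P.U),
    A (as ++ [a]) (bs ++ [b]) → ∀ n ∈ Θ, N.pred n a → P.pred n b

/-- (p-step). -/
def StepCond (k : ℕ) (A : List N.U → List P.U → Prop)
    (Arev : List P.U → List N.U → Prop) : Prop :=
  ∀ (as : List N.U) (bs : List P.U) (a : N.U) (b d : P.U),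
    A (as ++ [a]) (bs ++ [b]) → P.rel b d → as.length < k →
    ∃ c : N.U, N.rel a c ∧ A (as ++ [a, c]) (bs ++ [b, d]) ∧
      Arev (bs ++ [b, d]) (as ++ [a, c])

/-- (p-box-1). -/
def Box1Cond (k : ℕ) (A : List N.U → List P.U → Prop) : Prop :=
  ∀ (as : List N.U) (bs : List P.U) (a : N.U) (b d : P.U),
    A (as ++ [a]) (bs ++ [b]) → P.relBox b d → as.length < k →
    ∃ c : N.U, N.relBox a c ∧ A (as ++ [a, c]) (bs ++ [b, d])

/-- (p-box-2). -/
def Box2Cond (k : ℕ) (A : List N.U → List P.U → Prop) : Prop :=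
  ∀ (as : List N.U) (bs : List P.U) (a : N.U) (b d f : P.U),
    A (as ++ [a]) (bs ++ [b]) → P.rel b d → P.relBox d f → as.length + 1 < k →
    ∃ c e : N.U, N.rel a c ∧ N.relBox c e ∧ A (as ++ [a, c, e]) (bs ++ [b, d, f])

/-- (p-diam-1). -/
def Diam1Cond (k : ℕ) (A : List N.U → List P.U → Prop) : Prop :=
  ∀ (as : List N.U) (bs : List P.U) (a c : N.U) (b : P.U),
    A (as ++ [a]) (bs ++ [b]) → N.relDiam a c → as.length < k →
    ∃ d : P.U, P.relDiam b d ∧ A (as ++ [a, c]) (bs ++ [b, d])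

/-- (p-diam-2(1)). -/
def Diam2aCond (k : ℕ) (A B : List N.U → List P.U → Prop) : Prop :=
  ∀ (as : List N.U) (bs : List P.U) (a : N.U) (b d : P.U),
    A (as ++ [a]) (bs ++ [b]) → P.rel b d → as.length + 1 < k →
    ∃ c : N.U, N.rel a c ∧ B (as ++ [a, c]) (bs ++ [b, d])

/-- (p-diam-2(2)). -/
def Diam2bCond (k : ℕ) (B A : List N.U → List P.U → Prop) : Prop :=
  ∀ (as : List N.U) (bs : List P.U) (a c : N.U) (b : P.U),
    B (as ++ [a]) (bs ++ [b]) → N.relDiam a c → as.length < k →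
    ∃ d : P.U, P.relDiam b d ∧ A (as ++ [a, c]) (bs ++ [b, d])

end TupleConds

/-- An (i,1)-modal ⟨(M₁,t),(M₂,u)⟩_k-asimulation (j = 1): a single relation `A`
given by its two directed components `A12`, `A21`. -/
def IsKAsimD1 (boxOne : Bool) (Θ : Set ℕ) (M₁ M₂ : Model) (t : M₁.U) (u : M₂.U) (k : ℕ)
    (A12 : List M₁.U → List M₂.U → Prop) (A21 : List M₂.U → List M₁.U → Prop) : Prop :=
  TypeCond M₁ M₂ A12 ∧ TypeCond M₂ M₁ A21 ∧
  A12 [t] [u] ∧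
  BaseCond M₁ M₂ Θ A12 ∧ BaseCond M₂ M₁ Θ A21 ∧
  StepCond M₁ M₂ k A12 A21 ∧ StepCond M₂ M₁ k A21 A12 ∧
  (if boxOne then Box1Cond M₁ M₂ k A12 ∧ Box1Cond M₂ M₁ k A21
   else Box2Cond M₁ M₂ k A12 ∧ Box2Cond M₂ M₁ k A21) ∧
  Diam1Cond M₁ M₂ k A12 ∧ Diam1Cond M₂ M₁ k A21

/-- An (i,2)-modal ⟨(M₁,t),(M₂,u)⟩_k-asimulation (j = 2): an ordered pair
(A, B) of relations, each given by its two directed components. -/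
def IsKAsimD2 (boxOne : Bool) (Θ : Set ℕ) (M₁ M₂ : Model) (t : M₁.U) (u : M₂.U) (k : ℕ)
    (A12 : List M₁.U → List M₂.U → Prop) (A21 : List M₂.U → List M₁.U → Prop)
    (B12 : List M₁.U → List M₂.U → Prop) (B21 : List M₂.U → List M₁.U → Prop) : Prop :=
  TypeCond M₁ M₂ A12 ∧ TypeCond M₂ M₁ A21 ∧
  TypeCond M₁ M₂ B12 ∧ TypeCond M₂ M₁ B21 ∧
  A12 [t] [u] ∧
  BaseCond M₁ M₂ Θ A12 ∧ BaseCond M₂ M₁ Θ A21 ∧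
  StepCond M₁ M₂ k A12 A21 ∧ StepCond M₂ M₁ k A21 A12 ∧
  (if boxOne then Box1Cond M₁ M₂ k A12 ∧ Box1Cond M₂ M₁ k A21
   else Box2Cond M₁ M₂ k A12 ∧ Box2Cond M₂ M₁ k A21) ∧
  Diam2aCond M₁ M₂ k A12 B12 ∧ Diam2aCond M₂ M₁ k A21 B21 ∧
  Diam2bCond M₁ M₂ k B12 A12 ∧ Diam2bCond M₂ M₁ k B21 A21

/-- φ(x) is invariant with respect to (i,1)-modal k-asimulations. -/
def KInvariantD1 (boxOne : Bool) (x : ℕ) (φ : FOForm) (k : ℕ) : Prop :=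
  ∀ Θ : Set ℕ, (φ.predLetters : Set ℕ) ⊆ Θ →
  ∀ (M₁ M₂ : Model) (t : M₁.U) (u : M₂.U)
    (A12 : List M₁.U → List M₂.U → Prop) (A21 : List M₂.U → List M₁.U → Prop),
    IsKAsimD1 boxOne Θ M₁ M₂ t u k A12 A21 →
    ∀ (a : M₁.U) (b : M₂.U), A12 [a] [b] → SatAt M₁ a x φ → SatAt M₂ b x φ

/-- φ(x) is invariant with respect to (i,2)-modal k-asimulations. -/
def KInvariantD2 (boxOne : Bool) (x : ℕ) (φ : FOForm) (k : ℕ) : Prop :=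
  ∀ Θ : Set ℕ, (φ.predLetters : Set ℕ) ⊆ Θ →
  ∀ (M₁ M₂ : Model) (t : M₁.U) (u : M₂.U)
    (A12 : List M₁.U → List M₂.U → Prop) (A21 : List M₂.U → List M₁.U → Prop)
    (B12 : List M₁.U → List M₂.U → Prop) (B21 : List M₂.U → List M₁.U → Prop),
    IsKAsimD2 boxOne Θ M₁ M₂ t u k A12 A21 B12 B21 →
    ∀ (a : M₁.U) (b : M₂.U), A12 [a] [b] → SatAt M₁ a x φ → SatAt M₂ b x φ

/-! ### Conditions for asimulations *simpliciter* (relations between elements). -/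

section ElemConds

variable (N P : Model)

/-- (base). -/
def BaseCondE (Θ : Set ℕ) (A : N.U → P.U → Prop) : Prop :=
  ∀ (a : N.U) (b : P.U), A a b → ∀ n ∈ Θ, N.pred n a → P.pred n b

/-- (step). -/
def StepCondE (A : N.U → P.U → Prop) (Arev : P.U → N.U → Prop) : Prop :=
  ∀ (a : N.U) (b d : P.U), A a b → P.rel b d →
    ∃ c : N.U, N.rel a c ∧ A c d ∧ Arev d c

/-- (box-1). -/
def Box1CondE (A : N.U → P.U → Prop) : Prop :=
  ∀ (a : N.U) (b d : P.U), A a b → P.relBox b d →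
    ∃ c : N.U, N.relBox a c ∧ A c d

/-- (box-2). -/
def Box2CondE (A : N.U → P.U → Prop) : Prop :=
  ∀ (a : N.U) (b d f : P.U), A a b → P.rel b d → P.relBox d f →
    ∃ c e : N.U, N.rel a c ∧ N.relBox c e ∧ A e f

/-- (diam-1). -/
def Diam1CondE (A : N.U → P.U → Prop) : Prop :=
  ∀ (a c : N.U) (b : P.U), A a b → N.relDiam a c →
    ∃ d : P.U, P.relDiam b d ∧ A c d

/-- (diam-2(1)). -/
def Diam2aCondE (A B : N.U → P.U → Prop) : Prop :=
  ∀ (a : N.U) (b d : P.U), A a b → P.rel b d →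
    ∃ c : N.U, N.rel a c ∧ B c d

/-- (diam-2(2)). -/
def Diam2bCondE (B A : N.U → P.U → Prop) : Prop :=
  ∀ (a c : N.U) (b : P.U), B a b → N.relDiam a c →
    ∃ d : P.U, P.relDiam b d ∧ A c d

end ElemConds

/-- An (i,1)-modal ⟨(M₁,t),(M₂,u)⟩-asimulation (j = 1). -/
def IsAsimD1 (boxOne : Bool) (Θ : Set ℕ) (M₁ M₂ : Model) (t : M₁.U) (u : M₂.U)
    (A12 : M₁.U → M₂.U → Prop) (A21 : M₂.U → M₁.U → Prop) : Prop :=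
  A12 t u ∧
  BaseCondE M₁ M₂ Θ A12 ∧ BaseCondE M₂ M₁ Θ A21 ∧
  StepCondE M₁ M₂ A12 A21 ∧ StepCondE M₂ M₁ A21 A12 ∧
  (if boxOne then Box1CondE M₁ M₂ A12 ∧ Box1CondE M₂ M₁ A21
   else Box2CondE M₁ M₂ A12 ∧ Box2CondE M₂ M₁ A21) ∧
  Diam1CondE M₁ M₂ A12 ∧ Diam1CondE M₂ M₁ A21

/-- An (i,2)-modal ⟨(M₁,t),(M₂,u)⟩-asimulation (j = 2). -/
def IsAsimD2 (boxOne : Bool) (Θ : Set ℕ) (M₁ M₂ : Model) (t : M₁.U) (u : M₂.U)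
    (A12 : M₁.U → M₂.U → Prop) (A21 : M₂.U → M₁.U → Prop)
    (B12 : M₁.U → M₂.U → Prop) (B21 : M₂.U → M₁.U → Prop) : Prop :=
  A12 t u ∧
  BaseCondE M₁ M₂ Θ A12 ∧ BaseCondE M₂ M₁ Θ A21 ∧
  StepCondE M₁ M₂ A12 A21 ∧ StepCondE M₂ M₁ A21 A12 ∧
  (if boxOne then Box1CondE M₁ M₂ A12 ∧ Box1CondE M₂ M₁ A21
   else Box2CondE M₁ M₂ A12 ∧ Box2CondE M₂ M₁ A21) ∧
  Diam2aCondE M₁ M₂ A12 B12 ∧ Diam2aCondE M₂ M₁ A21 B21 ∧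
  Diam2bCondE M₁ M₂ B12 A12 ∧ Diam2bCondE M₂ M₁ B21 A21

/-- φ(x) is invariant with respect to (i,1)-modal asimulations. -/
def InvariantD1 (boxOne : Bool) (x : ℕ) (φ : FOForm) : Prop :=
  ∀ Θ : Set ℕ, (φ.predLetters : Set ℕ) ⊆ Θ →
  ∀ (M₁ M₂ : Model) (t : M₁.U) (u : M₂.U)
    (A12 : M₁.U → M₂.U → Prop) (A21 : M₂.U → M₁.U → Prop),
    IsAsimD1 boxOne Θ M₁ M₂ t u A12 A21 →
    ∀ (a : M₁.U) (b : M₂.U), A12 a b → SatAt M₁ a x φ → SatAt M₂ b x φ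

/-- φ(x) is invariant with respect to (i,2)-modal asimulations. -/
def InvariantD2 (boxOne : Bool) (x : ℕ) (φ : FOForm) : Prop :=
  ∀ Θ : Set ℕ, (φ.predLetters : Set ℕ) ⊆ Θ →
  ∀ (M₁ M₂ : Model) (t : M₁.U) (u : M₂.U)
    (A12 : M₁.U → M₂.U → Prop) (A21 : M₂.U → M₁.U → Prop)
    (B12 : M₁.U → M₂.U → Prop) (B21 : M₂.U → M₁.U → Prop),
    IsAsimD2 boxOne Θ M₁ M₂ t u A12 A21 B12 B21 →
    ∀ (a : M₁.U) (b : M₂.U), A12 a b → SatAt M₁ a x φ → SatAt M₂ b x φ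

/-! ### Types, complete conjunctions, ω-saturation. -/

/-- `int(φ,x,l)`: the set of (2,2)-standard x-translations of modal
intuitionistic formulas which are (Σ_φ,x,l)-formulas. -/
def intSet (φ : FOForm) (x l : ℕ) : Set FOForm :=
  {ψ | (∃ I : MForm, ψ = ST false false I x) ∧
    ψ.predLetters ⊆ φ.predLetters ∧ ψ.freeVars ⊆ {x} ∧ ψ.degree ≤ l}

/-- `tp_l(φ(x),M,a)`. -/
def tpSet (φ : FOForm) (x l : ℕ) (M : Model) (a : M.U) : Set FOForm :=
  {ψ | ψ ∈ intSet φ x l ∧ SatAt M a x ψ}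

/-- Conjunction of a nonempty list of formulas. -/
def listConj : FOForm → List FOForm → FOForm
  | ψ, [] => ψ
  | ψ, χ :: L => FOForm.conj ψ (listConj χ L)

/-- Ψ(x) is a complete (φ,x,k)-conjunction. -/
def IsCompleteConj (φ : FOForm) (x k : ℕ) (Ψ : FOForm) : Prop :=
  (∃ (ψ₀ : FOForm) (L : List FOForm), ψ₀ ∈ intSet φ x k ∧
    (∀ χ ∈ L, χ ∈ intSet φ x k) ∧ Ψ = listConj ψ₀ L) ∧
  ∃ (M : Model) (a : M.U), SatAt M a x (FOForm.conj Ψ φ) ∧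
    ∀ ψ ∈ tpSet φ x k M a, Entails Ψ ψ

/-- `int_x(Θ)` for the (i,j)-standard translation. -/
def intX (Θ : Set ℕ) (boxOne diamOne : Bool) (x : ℕ) : Set FOForm :=
  {ψ | (∃ I : MForm, ψ = ST boxOne diamOne I x) ∧ (ψ.predLetters : Set ℕ) ⊆ Θ}

/-- `tp_x(M,t)` for the (i,j)-standard translation. -/
def tpX (Θ : Set ℕ) (boxOne diamOne : Bool) (x : ℕ) (M : Model) (t : M.U) : Set FOForm :=
  {ψ | ψ ∈ intX Θ boxOne diamOne x ∧ SatAt M t x ψ}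

/-- `imp_x(M,t) = ⋂ { t̄p_x(M,u) : t R_◇ u }` (for the (2,2)-translation). -/
def impX (Θ : Set ℕ) (x : ℕ) (M : Model) (t : M.U) : Set FOForm :=
  {ψ | ψ ∈ intX Θ false false x ∧ ∀ u : M.U, M.relDiam t u → ¬ SatAt M u x ψ}

/-- ω-saturation: for every finite tuple of parameters (the first `n` values of
an assignment `α`) and every set `Γ` of formulas with finitely many free
variables beyond the parameters, if `Γ` is consistent with the first-order
theory of `[M,ā]` (i.e. satisfiable together with it in some model), then `Γ`
is realized in `[M,ā]`. -/
def OmegaSaturated (M : Model) : Prop :=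
  ∀ (n : ℕ) (α : ℕ → M.U) (Γ : Set FOForm),
    (∃ k : ℕ, ∀ γ ∈ Γ, γ.freeVars ⊆ Finset.range (n + k)) →
    (∃ (N : Model) (β : ℕ → N.U),
      (∀ ψ : FOForm, ψ.freeVars ⊆ Finset.range n → Sat M ψ α → Sat N ψ β) ∧
      ∀ γ ∈ Γ, Sat N γ β) →
    ∃ α' : ℕ → M.U, (∀ i < n, α' i = α i) ∧ ∀ γ ∈ Γ, Sat M γ α'

/-! ### Relativization to a class κ of models. -/

/-- κ(Θ) is first-order axiomatizable for every finite Θ (with R ∈ Θ): for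
every finite set `S` of unary predicate letters there is a set of Θ-sentences
axiomatizing membership in κ. -/
def FinAxiomatizable (κ : Set Model) : Prop :=
  ∀ S : Finset ℕ, ∃ Ax : Set FOForm,
    (∀ ψ ∈ Ax, ψ.freeVars = ∅ ∧ (ψ.predLetters : Set ℕ) ⊆ (S : Set ℕ)) ∧
    ∀ M : Model, M ∈ κ ↔ ∀ ψ ∈ Ax, ∀ α : ℕ → M.U, Sat M ψ α

/-- φ κ-follows from ψ: {ψ, ¬φ} is not κ-satisfiable. -/
def KappaFollows (κ : Set Model) (ψ φ : FOForm) : Prop :=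
  ¬ ∃ M : Model, M ∈ κ ∧ ∃ α : ℕ → M.U, Sat M ψ α ∧ ¬ Sat M φ α

/-- κ-equivalence of formulas. -/
def KappaEquiv (κ : Set Model) (φ ψ : FOForm) : Prop :=
  KappaFollows κ φ ψ ∧ KappaFollows κ ψ φ

/-- φ(x) is κ-invariant with respect to (i,1)-modal asimulations. -/
def KappaInvariantD1 (κ : Set Model) (boxOne : Bool) (x : ℕ) (φ : FOForm) : Prop :=
  ∀ Θ : Set ℕ, (φ.predLetters : Set ℕ) ⊆ Θ →
  ∀ (M₁ M₂ : Model), M₁ ∈ κ → M₂ ∈ κ →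
  ∀ (t : M₁.U) (u : M₂.U)
    (A12 : M₁.U → M₂.U → Prop) (A21 : M₂.U → M₁.U → Prop),
    IsAsimD1 boxOne Θ M₁ M₂ t u A12 A21 →
    ∀ (a : M₁.U) (b : M₂.U), A12 a b → SatAt M₁ a x φ → SatAt M₂ b x φ

/-- φ(x) is κ-invariant with respect to (i,2)-modal asimulations. -/
def KappaInvariantD2 (κ : Set Model) (boxOne : Bool) (x : ℕ) (φ : FOForm) : Prop :=
  ∀ Θ : Set ℕ, (φ.predLetters : Set ℕ) ⊆ Θ →
  ∀ (M₁ M₂ : Model), M₁ ∈ κ → M₂ ∈ κ →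
  ∀ (t : M₁.U) (u : M₂.U)
    (A12 : M₁.U → M₂.U → Prop) (A21 : M₂.U → M₁.U → Prop)
    (B12 : M₁.U → M₂.U → Prop) (B21 : M₂.U → M₁.U → Prop),
    IsAsimD2 boxOne Θ M₁ M₂ t u A12 A21 B12 B21 →
    ∀ (a : M₁.U) (b : M₂.U), A12 a b → SatAt M₁ a x φ → SatAt M₂ b x φ

/-- φ(x) is κ-invariant with respect to (i,j)-modal asimulations
(`diamOne = true` means j = 1). -/
def KappaInvariant (κ : Set Model) (boxOne diamOne : Bool) (x : ℕ) (φ : FOForm) : Prop :=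
  if diamOne then KappaInvariantD1 κ boxOne x φ else KappaInvariantD2 κ boxOne x φ


open Filter in
/-- Ultraproduct (no quotient is needed since the language has no identity). -/
def UP (M : ℕ → Model) : Model where
  U := ∀ i, (M i).U
  rel := fun f g => ∀ᶠ i in (hyperfilter ℕ : Filter ℕ), (M i).rel (f i) (g i)
  relBox := fun f g => ∀ᶠ i in (hyperfilter ℕ : Filter ℕ), (M i).relBox (f i) (g i)
  relDiam := fun f g => ∀ᶠ i in (hyperfilter ℕ : Filter ℕ), (M i).relDiam (f i) (g i)
  pred := fun n f => ∀ᶠ i in (hyperfilter ℕ : Filter ℕ), (M i).pred n (f i)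

/-- Direct forcing semantics of the (2,2)-translation. -/
def Frc (M : Model) : MForm → M.U → Prop
  | .bot, _ => False
  | .prop n, a => M.pred n a
  | .conj I J, a => Frc M I a ∧ Frc M J a
  | .disj I J, a => Frc M I a ∨ Frc M J a
  | .impl I J, a => ∀ b, M.rel a b → Frc M I b → Frc M J b
  | .box I, a => ∀ b, M.rel a b → ∀ c, M.relBox b c → Frc M I c
  | .diam I, a => ∀ b, M.rel a b → ∃ c, M.relDiam b c ∧ Frc M I c

theorem sat_ST (M : Model) (I : MForm) : ∀ (x : ℕ) (α : ℕ → M.U),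
    Sat M (ST false false I x) α ↔ Frc M I (α x) := by
  induction I with
  | bot => intro x α; simp [ST, Sat, Frc]
  | prop n => intro x α; simp [ST, Sat, Frc]
  | conj I J hI hJ => intro x α; simp [ST, Sat, Frc, hI, hJ]
  | disj I J hI hJ => intro x α; simp [ST, Sat, Frc, hI, hJ]
  | impl I J hI hJ => intro x α; simp [ST, Sat, Frc, hI, hJ, Model.relOf]
  | box I hI => intro x α; simp [ST, Sat, Frc, hI, Model.relOf]
  | diam I hI => intro x α; simp [ST, Sat, Frc, hI, Model.relOf]

theorem sat_congr (M : Model) (φ : FOForm) : ∀ (α β : ℕ → M.U),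
    (∀ v ∈ φ.freeVars, α v = β v) → (Sat M φ α ↔ Sat M φ β) := by
  induction φ with
  | falsum => intro α β h; simp [Sat]
  | pred n v => intro α β h; simp [FOForm.freeVars] at h; simp [Sat, h]
  | rel s v w => intro α β h; simp [FOForm.freeVars] at h; simp [Sat, h]
  | conj f g hf hg =>
    intro α β h; simp only [FOForm.freeVars, Finset.mem_union] at h
    simp only [Sat, hf α β (fun v hv => h v (.inl hv)), hg α β (fun v hv => h v (.inr hv))]
  | disj f g hf hg =>
    intro α β h; simp only [FOForm.freeVars, Finset.mem_union] at h
    simp only [Sat, hf α β (fun v hv => h v (.inl hv)), hg α β (fun v hv => h v (.inr hv))]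
  | impl f g hf hg =>
    intro α β h; simp only [FOForm.freeVars, Finset.mem_union] at h
    simp only [Sat, hf α β (fun v hv => h v (.inl hv)), hg α β (fun v hv => h v (.inr hv))]
  | all w f hf =>
    intro α β h
    refine forall_congr' fun u => hf _ _ fun v hv => ?_
    by_cases hvw : v = w
    · subst hvw; simp
    · simp only [Function.update_of_ne hvw]; exact h v (by simp [FOForm.freeVars, hv, hvw])
  | ex w f hf =>
    intro α β h
    refine exists_congr fun u => hf _ _ fun v hv => ?_
    by_cases hvw : v = w
    · subst hvw; simp
    · simp only [Function.update_of_ne hvw]; exact h v (by simp [FOForm.freeVars, hv, hvw])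

open Filter in
theorem ev_ex {X : ℕ → Type} (U : Filter ℕ) (Q : ∀ i, X i → Prop) (c₀ : ∀ i, X i) :
    (∃ c : ∀ i, X i, ∀ᶠ i in U, Q i (c i)) ↔ ∀ᶠ i in U, ∃ u, Q i u := by
  classical
  constructor
  · rintro ⟨c, hc⟩; exact hc.mono fun i hi => ⟨_, hi⟩
  · intro h
    refine ⟨fun i => if h : ∃ u, Q i u then h.choose else c₀ i, h.mono fun i hi => ?_⟩
    simp only [dif_pos hi]; exact hi.choose_spec

theorem upd_eq {M : ℕ → Model} (α : ℕ → (UP M).U) (v : ℕ) (u : (UP M).U) (i : ℕ) :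
    (fun n => Function.update α v u n i) = Function.update (fun n => α n i) v (u i) := by
  funext n
  by_cases h : n = v
  · subst h; simp
  · simp [Function.update_of_ne h]

open Filter in
theorem los (M : ℕ → Model) (φ : FOForm) : ∀ α : ℕ → (UP M).U,
    Sat (UP M) φ α ↔ ∀ᶠ i in (hyperfilter ℕ : Filter ℕ), Sat (M i) φ (fun n => α n i) := by
  induction φ with
  | falsum => intro α; simpa [Sat] using (hyperfilter ℕ).neBot.ne
  | pred n v => intro α; rfl
  | rel s v w => intro α; cases s <;> rfl
  | conj f g hf hg => intro α; simp only [Sat, hf, hg, eventually_and]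
  | disj f g hf hg => intro α; simp only [Sat, hf, hg, Ultrafilter.eventually_or]
  | impl f g hf hg => intro α; simp only [Sat, hf, hg, Ultrafilter.eventually_imp]
  | all w f hf =>
    intro α
    simp only [Sat, hf, upd_eq]
    rw [← not_iff_not, ← Ultrafilter.eventually_not]
    simp only [not_forall, ← Ultrafilter.eventually_not]
    exact ev_ex _ (fun i u => ¬ Sat (M i) f (Function.update (fun n => α n i) w u)) (α 0)
  | ex w f hf =>
    intro α
    simp only [Sat, hf, upd_eq]
    exact ev_ex _ (fun i u => Sat (M i) f (Function.update (fun n => α n i) w u)) (α 0)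

open Filter in
theorem los_frc (M : ℕ → Model) (I : MForm) (a : (UP M).U) :
    Frc (UP M) I a ↔ ∀ᶠ i in (hyperfilter ℕ : Filter ℕ), Frc (M i) I (a i) := by
  have := los M (ST false false I 0) (fun _ => a)
  simpa only [sat_ST] using this

open Filter in
theorem saturation {X : ℕ → Type} (q : ℕ → ∀ i, X i → Prop)
    (h : ∀ n, ∃ c : ∀ i, X i, ∀ k < n, ∀ᶠ i in (hyperfilter ℕ : Filter ℕ), q k i (c i)) :
    ∃ c : ∀ i, X i, ∀ k, ∀ᶠ i in (hyperfilter ℕ : Filter ℕ), q k i (c i) := by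
  classical
  obtain ⟨c₀, -⟩ := h 0
  let G : ℕ → ℕ → Prop := fun i m => ∃ u, ∀ k < m, q k i u
  have hG : ∀ i, G i (Nat.findGreatest (G i) i) := fun i =>
    Nat.findGreatest_spec (P := G i) (Nat.zero_le i) ⟨c₀ i, by simp⟩
  choose c hc using hG
  refine ⟨c, fun k => ?_⟩
  obtain ⟨d, hd⟩ := h (k + 1)
  have h1 : ∀ᶠ i in (hyperfilter ℕ : Filter ℕ), ∀ j ∈ Finset.range (k + 1), q j i (d i) := by
    rw [Filter.eventually_all_finset]
    intro j hj; exact hd j (Finset.mem_range.1 hj)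
  have h2 : ∀ᶠ i in (hyperfilter ℕ : Filter ℕ), k + 1 ≤ i :=
    Nat.hyperfilter_le_atTop (eventually_ge_atTop (k + 1))
  filter_upwards [h1, h2] with i hi1 hi2
  refine hc i k ?_
  exact Nat.le_findGreatest (P := G i) hi2 ⟨d i, fun j hj => hi1 j (Finset.mem_range.2 hj)⟩

/-- Numeric code of a modal formula. -/
def enc : MForm → ℕ
  | .bot => Nat.pair 0 0
  | .prop n => Nat.pair 1 n
  | .conj I J => Nat.pair 2 (Nat.pair (enc I) (enc J))
  | .disj I J => Nat.pair 3 (Nat.pair (enc I) (enc J))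
  | .impl I J => Nat.pair 4 (Nat.pair (enc I) (enc J))
  | .box I => Nat.pair 5 (enc I)
  | .diam I => Nat.pair 6 (enc I)

theorem enc_inj : Function.Injective enc := by
  intro I
  induction I with
  | bot => intro J h; cases J <;> simp [enc, Nat.pair_eq_pair] at h ⊢
  | prop n => intro J h; cases J <;> simp [enc, Nat.pair_eq_pair] at h ⊢; exact h
  | conj I I' h1 h2 =>
    intro J h; cases J <;> simp [enc, Nat.pair_eq_pair] at h ⊢; exact ⟨h1 h.1, h2 h.2⟩
  | disj I I' h1 h2 =>
    intro J h; cases J <;> simp [enc, Nat.pair_eq_pair] at h ⊢; exact ⟨h1 h.1, h2 h.2⟩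
  | impl I I' h1 h2 =>
    intro J h; cases J <;> simp [enc, Nat.pair_eq_pair] at h ⊢; exact ⟨h1 h.1, h2 h.2⟩
  | box I h1 => intro J h; cases J <;> simp [enc, Nat.pair_eq_pair] at h ⊢; exact h1 h
  | diam I h1 => intro J h; cases J <;> simp [enc, Nat.pair_eq_pair] at h ⊢; exact h1 h

theorem exists_enum : ∃ e : ℕ → MForm, Function.Surjective e := by
  have : Countable MForm := enc_inj.countable
  have : Nonempty MForm := ⟨.bot⟩
  exact exists_surjective_nat MForm

theorem exists_disj (e : ℕ → MForm) (p : MForm → Prop) (n : ℕ) : ∃ D : MForm,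
    ∀ (M : Model) (a : M.U), Frc M D a ↔ ∃ k < n, p (e k) ∧ Frc M (e k) a := by
  induction n with
  | zero => exact ⟨.bot, fun M a => by simp [Frc]⟩
  | succ n ih =>
    obtain ⟨D, hD⟩ := ih
    by_cases hp : p (e n)
    · refine ⟨.disj D (e n), fun M a => ?_⟩
      simp only [Frc, hD, Nat.lt_succ_iff_lt_or_eq]
      grind
    · refine ⟨D, fun M a => ?_⟩
      simp only [hD, Nat.lt_succ_iff_lt_or_eq]
      grind

theorem exists_conj (e : ℕ → MForm) (p : MForm → Prop) (n : ℕ) : ∃ D : MForm,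
    ∀ (M : Model) (a : M.U), Frc M D a ↔ ∀ k < n, p (e k) → Frc M (e k) a := by
  induction n with
  | zero => exact ⟨.impl .bot .bot, fun M a => by simp [Frc]⟩
  | succ n ih =>
    obtain ⟨D, hD⟩ := ih
    by_cases hp : p (e n)
    · refine ⟨.conj D (e n), fun M a => ?_⟩
      simp only [Frc, hD, Nat.lt_succ_iff_lt_or_eq]
      grind
    · refine ⟨D, fun M a => ?_⟩
      simp only [hD, Nat.lt_succ_iff_lt_or_eq]
      grind

/-- Type inclusion. -/
def TA (M N : Model) (a : M.U) (b : N.U) : Prop := ∀ I, Frc M I a → Frc N I b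

/-- Inclusion of diamond types. -/
def TB (M N : Model) (a : M.U) (b : N.U) : Prop :=
  ∀ I, (∃ c, M.relDiam a c ∧ Frc M I c) → ∃ d, N.relDiam b d ∧ Frc N I d

theorem ta_base (M N : Model) : BaseCondE M N Set.univ (TA M N) :=
  fun _ _ h n _ hn => h (.prop n) hn

open Filter in
theorem ta_step (M : ℕ → Model) (N : Model) : StepCondE (UP M) N (TA (UP M) N) (TA N (UP M)) := by
  obtain ⟨e, he⟩ := exists_enum
  intro a b d hab hbd
  have key := saturation (X := fun i => (M i).U)
    (fun k i u => (M i).rel (a i) u ∧ (Frc N (e k) d ↔ Frc (M i) (e k) u)) ?_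
  · obtain ⟨c, hc⟩ := key
    have hiff : ∀ I, Frc N I d ↔ Frc (UP M) I c := by
      intro I
      obtain ⟨k, rfl⟩ := he I
      refine Iff.trans ?_ (los_frc M (e k) c).symm
      have h2 := (hc k).mono fun i hi => hi.2
      by_cases h : Frc N (e k) d
      · exact ⟨fun _ => h2.mono fun i hi => hi.1 h, fun _ => h⟩
      · refine ⟨fun h' => absurd h' h, fun h' => ?_⟩
        obtain ⟨i, hi, hi'⟩ := (h2.and h').exists
        exact hi.2 hi'
    exact ⟨c, (hc 0).mono fun i hi => hi.1, fun I => (hiff I).2, fun I => (hiff I).1⟩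
  · intro n
    obtain ⟨C, hC⟩ := exists_conj e (fun I => Frc N I d) n
    obtain ⟨D, hD⟩ := exists_disj e (fun I => ¬ Frc N I d) n
    have hna : ¬ Frc (UP M) (.impl C D) a := by
      intro h
      have := hab _ h d hbd ((hC _ _).2 fun k _ hk => hk)
      obtain ⟨k, _, h1, h2⟩ := (hD _ _).1 this
      exact h1 h2
    simp only [Frc, not_forall] at hna
    obtain ⟨c, hac, hcC, hcD⟩ := hna
    refine ⟨c, fun k hk => ?_⟩
    refine Filter.Eventually.and hac ?_
    by_cases h : Frc N (e k) d
    · have := (los_frc M (e k) c).1 ((hC _ _).1 hcC k hk h)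
      exact this.mono fun i hi => by simp [h, hi]
    · have : ¬ Frc (UP M) (e k) c := fun h' => hcD ((hD _ _).2 ⟨k, hk, h, h'⟩)
      rw [los_frc, ← Ultrafilter.eventually_not] at this
      exact this.mono fun i hi => by simp [h, hi]

open Filter in
theorem ta_box (M : ℕ → Model) (N : Model) : Box2CondE (UP M) N (TA (UP M) N) := by
  obtain ⟨e, he⟩ := exists_enum
  intro a b d f hab hbd hdf
  have key := saturation (X := fun i => (M i).U × (M i).U)
    (fun k i u => (M i).rel (a i) u.1 ∧ (M i).relBox u.1 u.2 ∧
      (¬ Frc N (e k) f → ¬ Frc (M i) (e k) u.2)) ?_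
  · obtain ⟨c, hc⟩ := key
    refine ⟨fun i => (c i).1, fun i => (c i).2, (hc 0).mono fun i hi => hi.1,
      (hc 0).mono fun i hi => hi.2.1, fun I => ?_⟩
    obtain ⟨k, rfl⟩ := he I
    intro h'
    replace h' := (los_frc M (e k) (fun i => (c i).2)).1 h'
    by_contra h
    obtain ⟨i, hi, hi'⟩ := ((hc k).and h').exists
    exact hi.2.2 h hi'
  · intro n
    obtain ⟨D, hD⟩ := exists_disj e (fun I => ¬ Frc N I f) n
    have hna : ¬ Frc (UP M) (.box D) a := by
      intro h
      obtain ⟨k, _, h1, h2⟩ := (hD _ _).1 (hab _ h d hbd f hdf)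
      exact h1 h2
    simp only [Frc, not_forall] at hna
    obtain ⟨c, hac, g, hcg, hgD⟩ := hna
    refine ⟨fun i => (c i, g i), fun k hk => Filter.Eventually.and hac (Filter.Eventually.and hcg ?_)⟩
    by_cases h : Frc N (e k) f
    · simp [h]
    · have : ¬ Frc (UP M) (e k) g := fun h' => hgD ((hD _ _).2 ⟨k, hk, h, h'⟩)
      rw [los_frc, ← Ultrafilter.eventually_not] at this
      exact this.mono fun i hi => by simp [hi]

open Filter in
theorem los_dia (M : ℕ → Model) (I : MForm) (a : (UP M).U) :
    (∃ c, (UP M).relDiam a c ∧ Frc (UP M) I c) ↔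
      ∀ᶠ i in (hyperfilter ℕ : Filter ℕ), ∃ u, (M i).relDiam (a i) u ∧ Frc (M i) I u := by
  rw [← ev_ex _ (fun i u => (M i).relDiam (a i) u ∧ Frc (M i) I u) a]
  refine exists_congr fun c => ?_
  rw [los_frc, eventually_and]; rfl

open Filter in
theorem ta_diam1 (M : ℕ → Model) (N : Model) :
    Diam2aCondE (UP M) N (TA (UP M) N) (TB (UP M) N) := by
  obtain ⟨e, he⟩ := exists_enum
  intro a b d hab hbd
  have key := saturation (X := fun i => (M i).U)
    (fun k i u => (M i).rel (a i) u ∧ (¬ (∃ v, N.relDiam d v ∧ Frc N (e k) v) →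
      ¬ ∃ v, (M i).relDiam u v ∧ Frc (M i) (e k) v)) ?_
  · obtain ⟨c, hc⟩ := key
    refine ⟨c, (hc 0).mono fun i hi => hi.1, fun I => ?_⟩
    obtain ⟨k, rfl⟩ := he I
    intro h'
    replace h' := (los_dia M (e k) c).1 h'
    by_contra h
    obtain ⟨i, hi, hi'⟩ := ((hc k).and h').exists
    exact hi.2 h hi'
  · intro n
    obtain ⟨D, hD⟩ := exists_disj e (fun I => ¬ ∃ v, N.relDiam d v ∧ Frc N I v) n
    have hna : ¬ Frc (UP M) (.diam D) a := by
      intro h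
      obtain ⟨v, hv, hvD⟩ := hab _ h d hbd
      obtain ⟨k, _, h1, h2⟩ := (hD _ _).1 hvD
      exact h1 ⟨v, hv, h2⟩
    simp only [Frc, not_forall] at hna
    obtain ⟨c, hac, hcD⟩ := hna
    refine ⟨c, fun k hk => Filter.Eventually.and hac ?_⟩
    by_cases h : ∃ v, N.relDiam d v ∧ Frc N (e k) v
    · exact Filter.Eventually.of_forall fun i hn => absurd h hn
    · have : ¬ ∃ v, (UP M).relDiam c v ∧ Frc (UP M) (e k) v := fun ⟨v, hv, h'⟩ =>
        hcD ⟨v, hv, (hD _ _).2 ⟨k, hk, h, h'⟩⟩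
      rw [los_dia, ← Ultrafilter.eventually_not] at this
      exact this.mono fun i hi _ => hi

open Filter in
theorem ta_diam2 (M : Model) (N : ℕ → Model) :
    Diam2bCondE M (UP N) (TB M (UP N)) (TA M (UP N)) := by
  obtain ⟨e, he⟩ := exists_enum
  intro a c b hab hac
  have key := saturation (X := fun i => (N i).U)
    (fun k i u => (N i).relDiam (b i) u ∧ (Frc M (e k) c → Frc (N i) (e k) u)) ?_
  · obtain ⟨d, hd⟩ := key
    refine ⟨d, (hd 0).mono fun i hi => hi.1, fun I h => ?_⟩
    obtain ⟨k, rfl⟩ := he I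
    exact (los_frc N (e k) d).2 ((hd k).mono fun i hi => hi.2 h)
  · intro n
    obtain ⟨C, hC⟩ := exists_conj e (fun I => Frc M I c) n
    obtain ⟨d, hbd, hdC⟩ := hab C ⟨c, hac, (hC _ _).2 fun k _ hk => hk⟩
    refine ⟨d, fun k hk => Filter.Eventually.and hbd ?_⟩
    by_cases h : Frc M (e k) c
    · exact ((los_frc N (e k) d).1 ((hC _ _).1 hdC k hk h)).mono fun i hi _ => hi
    · simp [h]

theorem frc_invariant {M₁ M₂ : Model} {t u A12 A21 B12 B21}
    (h : IsAsimD2 false Set.univ M₁ M₂ t u A12 A21 B12 B21) (I : MForm) :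
    (∀ a b, A12 a b → Frc M₁ I a → Frc M₂ I b) ∧ (∀ a b, A21 a b → Frc M₂ I a → Frc M₁ I b) := by
  obtain ⟨-, b1, b2, s1, s2, hbox, d1, d2, d3, d4⟩ := h
  simp only [Bool.false_eq_true, if_false] at hbox
  obtain ⟨x1, x2⟩ := hbox
  induction I with
  | bot => exact ⟨fun _ _ _ h => h, fun _ _ _ h => h⟩
  | prop n =>
    exact ⟨fun a b hab h => b1 a b hab n trivial h, fun a b hab h => b2 a b hab n trivial h⟩
  | conj I J hI hJ =>
    exact ⟨fun a b hab h => ⟨hI.1 a b hab h.1, hJ.1 a b hab h.2⟩,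
      fun a b hab h => ⟨hI.2 a b hab h.1, hJ.2 a b hab h.2⟩⟩
  | disj I J hI hJ =>
    exact ⟨fun a b hab h => h.imp (hI.1 a b hab) (hJ.1 a b hab),
      fun a b hab h => h.imp (hI.2 a b hab) (hJ.2 a b hab)⟩
  | impl I J hI hJ =>
    constructor
    · intro a b hab h d hbd hd
      obtain ⟨c, hac, hcd, hdc⟩ := s1 a b d hab hbd
      exact hJ.1 c d hcd (h c hac (hI.2 d c hdc hd))
    · intro a b hab h d hbd hd
      obtain ⟨c, hac, hcd, hdc⟩ := s2 a b d hab hbd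
      exact hJ.2 c d hcd (h c hac (hI.1 d c hdc hd))
  | box I hI =>
    constructor
    · intro a b hab h d hbd f hdf
      obtain ⟨c, e, hac, hce, hef⟩ := x1 a b d f hab hbd hdf
      exact hI.1 e f hef (h c hac e hce)
    · intro a b hab h d hbd f hdf
      obtain ⟨c, e, hac, hce, hef⟩ := x2 a b d f hab hbd hdf
      exact hI.2 e f hef (h c hac e hce)
  | diam I hI =>
    constructor
    · intro a b hab h d hbd
      obtain ⟨c, hac, hcd⟩ := d1 a b d hab hbd
      obtain ⟨e, hce, he⟩ := h c hac
      obtain ⟨f, hdf, hef⟩ := d3 c e d hcd hce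
      exact ⟨f, hdf, hI.1 e f hef he⟩
    · intro a b hab h d hbd
      obtain ⟨c, hac, hcd⟩ := d2 a b d hab hbd
      obtain ⟨e, hce, he⟩ := h c hac
      obtain ⟨f, hdf, hef⟩ := d4 c e d hcd hce
      exact ⟨f, hdf, hI.2 e f hef he⟩

/-- The reduct of a model: letters outside `Θ` are made empty. -/
def Model.cut (M : Model) (Θ : Set ℕ) : Model where
  U := M.U
  rel := M.rel
  relBox := M.relBox
  relDiam := M.relDiam
  pred := fun n a => n ∈ Θ ∧ M.pred n a

theorem sat_cut (M : Model) (Θ : Set ℕ) (φ : FOForm) : (φ.predLetters : Set ℕ) ⊆ Θ →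
    ∀ α : ℕ → M.U, Sat (M.cut Θ) φ α ↔ Sat M φ α := by
  induction φ with
  | falsum => intro _ α; rfl
  | pred n v =>
    intro h α
    have : n ∈ Θ := h (by simp [FOForm.predLetters])
    exact ⟨fun h => h.2, fun h => ⟨this, h⟩⟩
  | rel s v w => intro _ α; cases s <;> rfl
  | conj f g hf hg =>
    intro h α
    simp only [FOForm.predLetters, Finset.coe_union, Set.union_subset_iff] at h
    exact and_congr (hf h.1 α) (hg h.2 α)
  | disj f g hf hg =>
    intro h α
    simp only [FOForm.predLetters, Finset.coe_union, Set.union_subset_iff] at h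
    exact or_congr (hf h.1 α) (hg h.2 α)
  | impl f g hf hg =>
    intro h α
    simp only [FOForm.predLetters, Finset.coe_union, Set.union_subset_iff] at h
    exact imp_congr (hf h.1 α) (hg h.2 α)
  | all w f hf => intro h α; exact forall_congr' fun u => hf h _
  | ex w f hf => intro h α; exact exists_congr fun u => hf h _

theorem forward (x : ℕ) (φ : FOForm) (I : MForm) (hI : Equiv φ (ST false false I x)) :
    InvariantD2 false x φ := by
  intro Θ hΘ M₁ M₂ t u A12 A21 B12 B21 h a b hab hsat α hα
  have h' : IsAsimD2 false Set.univ (M₁.cut Θ) (M₂.cut Θ) t u A12 A21 B12 B21 := by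
    obtain ⟨h0, b1, b2, rest⟩ := h
    exact ⟨h0, fun a b hab n _ hn => ⟨hn.1, b1 a b hab n hn.1 hn.2⟩,
      fun a b hab n _ hn => ⟨hn.1, b2 a b hab n hn.1 hn.2⟩, rest⟩
  have h1 := (sat_cut M₁ Θ φ hΘ (fun _ => a)).2 (hsat (fun _ => a) rfl)
  have h2 := (sat_ST _ I x _).1 ((hI (M₁.cut Θ) (fun _ => a)).1 h1)
  have h3 : Frc (M₂.cut Θ) I b := (frc_invariant h' I).1 a b hab h2
  refine (sat_cut M₂ Θ φ hΘ α).1 ((hI (M₂.cut Θ) α).2 ((sat_ST (M₂.cut Θ) I x α).2 ?_))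
  rw [hα]; exact h3

open Filter in
theorem backward (x : ℕ) (φ : FOForm) (hfv : φ.freeVars ⊆ {x}) (hinv : InvariantD2 false x φ) :
    ∃ I : MForm, Equiv φ (ST false false I x) := by
  by_contra hno
  obtain ⟨e, he⟩ := exists_enum
  let cons : MForm → Prop := fun I => ∀ (M : Model) (α : ℕ → M.U), Sat M φ α → Frc M I (α x)
  have hN : ∀ n, ∃ (N : Model) (β : ℕ → N.U),
      (∀ k < n, cons (e k) → Frc N (e k) (β x)) ∧ ¬ Sat N φ β := by
    intro n
    obtain ⟨C, hC⟩ := exists_conj e cons n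
    by_contra hcon
    push Not at hcon
    refine hno ⟨C, fun M α => ?_⟩
    rw [sat_ST, hC]
    exact ⟨fun h k _ hk => hk M α h, fun h => hcon M α h⟩
  choose N β hβ hβφ using hN
  let b : ℕ → (UP N).U := fun v i => β i v
  have hb1 : ¬ Sat (UP N) φ b := by
    rw [los, ← Ultrafilter.eventually_not]
    exact Filter.Eventually.of_forall hβφ
  have hb2 : ∀ I, cons I → Frc (UP N) I (b x) := by
    intro I hI
    obtain ⟨k, rfl⟩ := he I
    rw [los_frc]
    have h2 : ∀ᶠ i in (hyperfilter ℕ : Filter ℕ), k + 1 ≤ i :=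
      Nat.hyperfilter_le_atTop (eventually_ge_atTop (k + 1))
    exact h2.mono fun i hi => hβ i k hi hI
  have hM : ∀ n, ∃ (M : Model) (α : ℕ → M.U),
      (∀ k < n, ¬ Frc (UP N) (e k) (b x) → ¬ Frc M (e k) (α x)) ∧ Sat M φ α := by
    intro n
    obtain ⟨D, hD⟩ := exists_disj e (fun I => ¬ Frc (UP N) I (b x)) n
    by_contra hcon
    push Not at hcon
    have : cons D := by
      intro M α h
      rw [hD]
      by_contra hc
      push Not at hc
      exact hcon M α (fun k hk h' => hc k hk h') h
    obtain ⟨k, _, h1, h2⟩ := (hD _ _).1 (hb2 D this)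
    exact h1 h2
  choose M α hα hαφ using hM
  let a : ℕ → (UP M).U := fun v i => α i v
  have ha1 : Sat (UP M) φ a := by
    rw [los]
    exact Filter.Eventually.of_forall hαφ
  have hab : TA (UP M) (UP N) (a x) (b x) := by
    intro I
    obtain ⟨k, rfl⟩ := he I
    intro h
    by_contra hc
    rw [los_frc] at h
    have h2 : ∀ᶠ i in (hyperfilter ℕ : Filter ℕ), k + 1 ≤ i :=
      Nat.hyperfilter_le_atTop (eventually_ge_atTop (k + 1))
    obtain ⟨i, hi, hi'⟩ := (h.and h2).exists
    exact hα i k hi' hc hi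
  refine hb1 (hinv Set.univ (Set.subset_univ _) (UP M) (UP N) (a x) (b x) (TA _ _) (TA _ _)
    (TB _ _) (TB _ _) ⟨hab, ta_base _ _, ta_base _ _, ta_step _ _, ta_step _ _, ?_, ta_diam1 _ _,
      ta_diam1 _ _, ta_diam2 _ _, ta_diam2 _ _⟩ (a x) (b x) hab ?_ b rfl)
  · simp only [Bool.false_eq_true, if_false]
    exact ⟨ta_box _ _, ta_box _ _⟩
  · intro γ hγ
    refine (sat_congr _ φ _ _ fun v hv => ?_).1 ha1
    have := Finset.mem_singleton.1 (hfv hv)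
    rw [this, hγ]

/-- **Theorem 2, case (i,j) = (2,2).**  φ(x) is logically equivalent to the
(2,2)-standard x-translation of a modal intuitionistic formula iff φ(x) is
invariant with respect to (2,2)-modal asimulations. -/
theorem statement_4 (x : ℕ) (φ : FOForm) (hfv : φ.freeVars ⊆ {x}) :
    (∃ I : MForm, Equiv φ (ST false false I x)) ↔ InvariantD2 false x φ := by
  exact ⟨fun ⟨I, hI⟩ => forward x φ I hI, backward x φ hfv⟩

end ModalIntAsim
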